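/- For every M > 0 there exists a constant C₁ > 0, depending only on M, with the following property: for every integer N ≥ 1 (with h = 1/N), every g₀ > 0, all periodic grid functions φ₁, φ₂ with ‖φ₁‖_∞ ≤ M and ‖φ₂‖_∞ ≤ M such that φ₁ − φ₂ has zero mean, and every periodic grid function g with g(i,j,k) ≥ g₀ for all (i,j,k), every zero-mean periodic grid function ψ satisfying −(d_x(A_x g·D_x ψ) + d_y(A_y g·D_y ψ) + d_z(A_z g·D_z ψ)) = φ₁ − φ₂ obeys ‖ψ‖_∞ ≤ C₁·g₀^{−1}·h^{−1/2}. -/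

import Mathlib

open scoped BigOperators

/-- The periodic grid of indices: `(ZMod N)^3`. -/
abbrev GridIdx (N : ℕ) := ZMod N × ZMod N × ZMod N

namespace PNP

/-- Shift the first index by `a`. -/
def xsh {N : ℕ} (p : GridIdx N) (a : ZMod N) : GridIdx N := (p.1 + a, p.2.1, p.2.2)
/-- Shift the second index by `a`. -/
def ysh {N : ℕ} (p : GridIdx N) (a : ZMod N) : GridIdx N := (p.1, p.2.1 + a, p.2.2)
/-- Shift the third index by `a`. -/
def zsh {N : ℕ} (p : GridIdx N) (a : ZMod N) : GridIdx N := (p.1, p.2.1, p.2.2 + a)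

/-- Forward difference in `x`: `(D_x f)(p) = (f(p + e_x) - f(p)) / h` with `h = 1/N`. -/
noncomputable def Dx (N : ℕ) (f : GridIdx N → ℝ) : GridIdx N → ℝ :=
  fun p => (f (xsh p 1) - f p) * N
/-- Forward difference in `y`. -/
noncomputable def Dy (N : ℕ) (f : GridIdx N → ℝ) : GridIdx N → ℝ :=
  fun p => (f (ysh p 1) - f p) * N
/-- Forward difference in `z`. -/
noncomputable def Dz (N : ℕ) (f : GridIdx N → ℝ) : GridIdx N → ℝ :=
  fun p => (f (zsh p 1) - f p) * N

/-- Backward difference in `x`: `(d_x f)(p) = (f(p) - f(p - e_x)) / h`. -/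
noncomputable def dxm (N : ℕ) (f : GridIdx N → ℝ) : GridIdx N → ℝ :=
  fun p => (f p - f (xsh p (-1))) * N
/-- Backward difference in `y`. -/
noncomputable def dym (N : ℕ) (f : GridIdx N → ℝ) : GridIdx N → ℝ :=
  fun p => (f p - f (ysh p (-1))) * N
/-- Backward difference in `z`. -/
noncomputable def dzm (N : ℕ) (f : GridIdx N → ℝ) : GridIdx N → ℝ :=
  fun p => (f p - f (zsh p (-1))) * N

/-- Forward average in `x`: `(A_x f)(p) = (f(p + e_x) + f(p)) / 2`. -/
noncomputable def Ax (N : ℕ) (f : GridIdx N → ℝ) : GridIdx N → ℝ :=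
  fun p => (f (xsh p 1) + f p) / 2
/-- Forward average in `y`. -/
noncomputable def Ay (N : ℕ) (f : GridIdx N → ℝ) : GridIdx N → ℝ :=
  fun p => (f (ysh p 1) + f p) / 2
/-- Forward average in `z`. -/
noncomputable def Az (N : ℕ) (f : GridIdx N → ℝ) : GridIdx N → ℝ :=
  fun p => (f (zsh p 1) + f p) / 2

/-- The discrete Laplacian `Δ_h f = d_x(D_x f) + d_y(D_y f) + d_z(D_z f)`. -/
noncomputable def lap (N : ℕ) (f : GridIdx N → ℝ) : GridIdx N → ℝ :=
  fun p => dxm N (Dx N f) p + dym N (Dy N f) p + dzm N (Dz N f) p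

/-- The discrete inner product `⟨f, g⟩ = h³ ∑ f·g` with `h = 1/N`. -/
noncomputable def ip (N : ℕ) [NeZero N] (f g : GridIdx N → ℝ) : ℝ :=
  ((1 : ℝ) / N) ^ 3 * ∑ p : GridIdx N, f p * g p

/-- The discrete `L²` norm `‖f‖₂ = ⟨f, f⟩^{1/2}`. -/
noncomputable def l2 (N : ℕ) [NeZero N] (f : GridIdx N → ℝ) : ℝ :=
  Real.sqrt (ip N f f)

/-- The discrete maximum norm `‖f‖_∞ = max |f|`. -/
noncomputable def linf (N : ℕ) [NeZero N] (f : GridIdx N → ℝ) : ℝ :=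
  ⨆ p : GridIdx N, |f p|

/-- A grid function has zero mean if its values sum to zero. -/
def zeroMean (N : ℕ) [NeZero N] (f : GridIdx N → ℝ) : Prop :=
  ∑ p : GridIdx N, f p = 0

/-- With `F(x) = x·ln x`, the difference quotient `G¹_a(x) = (F(x) - F(a))/(x - a)`
for `x ≠ a`, with value `F'(a) = ln a + 1` at `x = a`. -/
noncomputable def G1 (a x : ℝ) : ℝ :=
  if x = a then Real.log a + 1
  else (x * Real.log x - a * Real.log a) / (x - a)

end PNP

open PNP

/-!
Write `G` for the sum of the `L²` norms of the three forward differences of `ψ`. Summation by parts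
gives `g₀ G² ≤ 3 ⟨ψ, L_g ψ⟩ ≤ 6 M 𝔼|ψ|`, and the `L¹` Poincaré inequality `𝔼|ψ| ≤ G` turns this into
`G ≤ 6 M / g₀`. To pass from `G` to the maximum norm, compare `ψ p` with its mean over the cube of
side `n` with corner `p`. Enlarging the cube one layer at a time changes this mean, by
Cauchy–Schwarz, by at most `√N G / ((n + 1) √n)`, which telescopes against `2 √N G / √n`. At
`n = N` the mean is zero, so `‖ψ‖_∞ ≤ 2 √N G`.
-/

namespace PNP

open Finset

section Arc

variable {N n a b : ℕ}

/-- The arc `x, x + 1, …, x + (n - 1)` of the cycle `ZMod N`. Boxes in the periodic grid are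
products of arcs. -/
def arc (x : ZMod N) (n : ℕ) : Finset (ZMod N) :=
  (range n).image fun i : ℕ => x + i

lemma injOn_add_natCast (x : ZMod N) (hn : n ≤ N) :
    Set.InjOn (fun i : ℕ => x + i) (range n) := by
  have hsub : (range n : Set ℕ) ⊆ Set.Iio N := fun i hi => (mem_range.1 hi).trans_le hn
  exact fun i hi j hj h =>
    CharP.natCast_injOn_Iio (ZMod N) N (hsub hi) (hsub hj) (add_left_cancel h)

lemma card_arc (x : ZMod N) (hn : n ≤ N) : #(arc x n) = n := by
  rw [arc, card_image_of_injOn (injOn_add_natCast x hn), card_range]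

lemma sq_le_card_arc_product (x y : ZMod N) (ha : n ≤ a) (haN : a ≤ N) (hb : n ≤ b)
    (hbN : b ≤ N) : n ^ 2 ≤ #(arc x a ×ˢ arc y b) := by
  rw [card_product, card_arc x haN, card_arc y hbN, sq]
  exact Nat.mul_le_mul ha hb

lemma arc_self [NeZero N] (x : ZMod N) : arc x N = univ :=
  (card_eq_iff_eq_univ _).1 <| by rw [card_arc x le_rfl, ZMod.card]

lemma arc_one (x : ZMod N) : arc x 1 = {x} := by simp [arc]

lemma sum_arc {E : Type*} [AddCommMonoid E] (x : ZMod N) (hn : n ≤ N) (u : ZMod N → E) :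
    ∑ t ∈ arc x n, u t = ∑ i ∈ range n, u (x + i) :=
  sum_image (injOn_add_natCast x hn)

lemma expect_arc {E : Type*} [AddCommMonoid E] [Module ℚ≥0 E] (x : ZMod N) (hn : n ≤ N)
    (u : ZMod N → E) :
    𝔼 t ∈ arc x n, u t = 𝔼 i ∈ range n, u (x + i) :=
  expect_image (injOn_add_natCast x hn)

end Arc

section ArcMean

lemma abs_expect_range_succ_sub_expect_range_le (F : ℕ → ℝ) {n : ℕ} (hn : n ≠ 0) :
    |𝔼 i ∈ range (n + 1), F i - 𝔼 i ∈ range n, F i| ≤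
      (∑ t ∈ range n, |F (t + 1) - F t|) / (n + 1) := by
  have hn' : (range n).Nonempty := nonempty_range_iff.2 hn
  have osc (i : ℕ) (hi : i ∈ range n) : |F n - F i| ≤ ∑ t ∈ range n, |F (t + 1) - F t| := by
    rw [← Real.dist_eq, dist_comm]
    calc dist (F i) (F n) ≤ ∑ t ∈ Ico i n, dist (F t) (F (t + 1)) :=
          dist_le_Ico_sum_dist F (mem_range.1 hi).le
      _ ≤ ∑ t ∈ range n, dist (F t) (F (t + 1)) := by
          rw [range_eq_Ico]
          gcongr
          exact Nat.zero_le i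
      _ = _ := sum_congr rfl fun t _ => dist_comm _ _
  have new_term : (n + 1) * (𝔼 i ∈ range (n + 1), F i - 𝔼 i ∈ range n, F i) =
      𝔼 i ∈ range n, (F n - F i) := by
    have sum_succ := card_mul_expect (range (n + 1)) F
    rw [sum_range_succ, ← card_mul_expect (range n) F] at sum_succ
    simp only [card_range, Nat.cast_succ] at sum_succ
    rw [expect_sub_distrib, expect_const hn']
    linarith
  rw [le_div_iff₀ (by positivity), mul_comm, ← abs_of_nonneg (by positivity : (0 : ℝ) ≤ n + 1),
    ← abs_mul, new_term]
  exact (abs_expect_le _ _).trans (expect_le hn' osc)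

variable {ι : Type*} [Fintype ι] {N : ℕ} [NeZero N] {n : ℕ}

/-- Cauchy–Schwarz over `arc x n × R` gives the constant `√(n / #R) ≤ 1 / √n`. -/
lemma sum_abs_expect_sub_le (F : ZMod N → ι → ℝ) (x : ZMod N) {R : Finset ι} (hn : n ≠ 0)
    (hnN : n ≤ N) (hR : n ^ 2 ≤ #R) :
    ∑ t ∈ arc x n, |𝔼 r ∈ R, F (t + 1) r - 𝔼 r ∈ R, F t r| ≤
      √(∑ t, ∑ r, (F (t + 1) r - F t r) ^ 2) / √n := by
  have hn' : (0 : ℝ) < n := by positivity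
  have hR' : (n : ℝ) ^ 2 ≤ #R := by exact_mod_cast hR
  have slice_sq_le (t : ZMod N) :
      |𝔼 r ∈ R, F (t + 1) r - 𝔼 r ∈ R, F t r| ^ 2 ≤
        (∑ r, (F (t + 1) r - F t r) ^ 2) / n ^ 2 := by
    rw [sq_abs, ← expect_sub_distrib, expect_eq_sum_div_card]
    calc ((∑ r ∈ R, (F (t + 1) r - F t r)) / #R) ^ 2
        ≤ (∑ r ∈ R, (F (t + 1) r - F t r) ^ 2) / #R := sum_div_card_sq_le_sum_sq_div_card
      _ ≤ (∑ r, (F (t + 1) r - F t r) ^ 2) / n ^ 2 := by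
          gcongr
          exact subset_univ R
  rw [← Real.sqrt_div' _ hn'.le]
  refine Real.le_sqrt_of_sq_le ?_
  calc (∑ t ∈ arc x n, |𝔼 r ∈ R, F (t + 1) r - 𝔼 r ∈ R, F t r|) ^ 2
      ≤ n * ∑ t ∈ arc x n, |𝔼 r ∈ R, F (t + 1) r - 𝔼 r ∈ R, F t r| ^ 2 := by
        simpa only [card_arc x hnN] using sq_sum_le_card_mul_sum_sq (s := arc x n)
          (f := fun t => |𝔼 r ∈ R, F (t + 1) r - 𝔼 r ∈ R, F t r|)
    _ ≤ n * ∑ t, (∑ r, (F (t + 1) r - F t r) ^ 2) / n ^ 2 := by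
        gcongr
        exact (sum_le_sum fun t _ => slice_sq_le t).trans
          (sum_le_univ_sum_of_nonneg fun t => by positivity)
    _ = (∑ t, ∑ r, (F (t + 1) r - F t r) ^ 2) / n := by
        rw [← sum_div]
        field_simp

lemma abs_expect_arc_succ_sub_expect_arc_le (F : ZMod N → ι → ℝ) (x : ZMod N) {R : Finset ι}
    (hn : n ≠ 0) (hnN : n < N) (hR : n ^ 2 ≤ #R) :
    |𝔼 t ∈ arc x (n + 1), 𝔼 r ∈ R, F t r - 𝔼 t ∈ arc x n, 𝔼 r ∈ R, F t r| ≤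
      √(∑ t, ∑ r, (F (t + 1) r - F t r) ^ 2) / ((n + 1) * √n) := by
  have h := abs_expect_range_succ_sub_expect_range_le (fun i => 𝔼 r ∈ R, F (x + i) r) hn
  simp only [Nat.cast_succ, ← add_assoc] at h
  rw [expect_arc x hnN, expect_arc x hnN.le, mul_comm, ← div_div]
  refine h.trans ?_
  rw [← sum_arc x hnN.le fun t => |𝔼 r ∈ R, F (t + 1) r - 𝔼 r ∈ R, F t r|]
  gcongr
  exact sum_abs_expect_sub_le F x hn hnN.le hR

end ArcMean

section Poincare

variable {α β : Type*} [Fintype α] [Fintype β]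

lemma expect_univ_prod {E : Type*} [AddCommMonoid E] [Module ℚ≥0 E] (f : α × β → E) :
    𝔼 p, f p = 𝔼 a, 𝔼 b, f (a, b) :=
  expect_product univ univ f

lemma expect_abs_sub_expect_prod_le [Nonempty α] [Nonempty β] (f : α × β → ℝ) :
    𝔼 p, |f p - 𝔼 q, f q| ≤
      (𝔼 b, 𝔼 a, |f (a, b) - 𝔼 a', f (a', b)|) + 𝔼 a, 𝔼 b, |f (a, b) - 𝔼 b', f (a, b')| := by
  have slice_mean (b : β) :
      |𝔼 a, f (a, b) - 𝔼 q, f q| ≤ 𝔼 a, |f (a, b) - 𝔼 b', f (a, b')| := by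
    rw [expect_univ_prod, ← expect_sub_distrib]
    exact abs_expect_le _ _
  calc 𝔼 p, |f p - 𝔼 q, f q|
      = 𝔼 b, 𝔼 a, |f (a, b) - 𝔼 q, f q| := by
        rw [expect_univ_prod fun p => |f p - 𝔼 q, f q|, expect_comm]
    _ ≤ 𝔼 b, 𝔼 a, (|f (a, b) - 𝔼 a', f (a', b)| + 𝔼 a', |f (a', b) - 𝔼 b', f (a', b')|) :=
        expect_le_expect fun b _ => expect_le_expect fun a _ =>
          (abs_sub_le _ (𝔼 a', f (a', b)) _).trans (by gcongr; exact slice_mean b)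
    _ = _ := by
        simp only [expect_add_distrib, Fintype.expect_const]
        rw [expect_comm univ univ fun b a => |f (a, b) - 𝔼 b', f (a, b')|]

variable {N : ℕ} [NeZero N]

lemma abs_sub_le_expect_abs_diff (u : ZMod N → ℝ) (x y : ZMod N) :
    |u x - u y| ≤ 𝔼 t, |(u (t + 1) - u t) * N| := by
  have path := dist_le_range_sum_dist (fun i : ℕ => u (x + i)) (y - x).val
  simp only [Nat.cast_zero, add_zero, ZMod.natCast_zmod_val, add_sub_cancel, Nat.cast_succ,
    Real.dist_eq, ← add_assoc] at path
  calc |u x - u y|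
      ≤ ∑ i ∈ range (y - x).val, |u (x + i) - u (x + i + 1)| := path
    _ ≤ ∑ i ∈ range N, |u (x + i) - u (x + i + 1)| := by
        gcongr
        exact (ZMod.val_lt _).le
    _ = ∑ t, |u (t + 1) - u t| := by
        rw [← sum_arc x le_rfl fun t => |u t - u (t + 1)|, arc_self]
        simp only [abs_sub_comm]
    _ = 𝔼 t, |(u (t + 1) - u t) * N| := by
        have hN : (N : ℝ) ≠ 0 := NeZero.ne _
        simp only [Fintype.expect_eq_sum_div_card, abs_mul, Nat.abs_cast, ← sum_mul, ZMod.card]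
        field_simp

lemma expect_abs_sub_expect_le_expect_abs_diff (u : ZMod N → ℝ) :
    𝔼 x, |u x - 𝔼 y, u y| ≤ 𝔼 t, |(u (t + 1) - u t) * N| := by
  refine expect_le univ_nonempty fun x _ => ?_
  calc |u x - 𝔼 y, u y| = |𝔼 y, (u x - u y)| := by
        rw [expect_sub_distrib, Fintype.expect_const]
    _ ≤ 𝔼 y, |u x - u y| := abs_expect_le _ _
    _ ≤ _ := expect_le univ_nonempty fun y _ => abs_sub_le_expect_abs_diff u x y

end Poincare

section GradNorm

variable {N : ℕ} [NeZero N]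

lemma ip_eq_expect (f g : GridIdx N → ℝ) : ip N f g = 𝔼 p, f p * g p := by
  simp only [ip, Fintype.expect_eq_sum_div_card, Fintype.card_prod, ZMod.card, Nat.cast_mul]
  ring

lemma l2_sq (f : GridIdx N → ℝ) : l2 N f ^ 2 = 𝔼 p, f p ^ 2 := by
  rw [l2, Real.sq_sqrt] <;> simp only [ip_eq_expect, ← sq]
  positivity

lemma expect_abs_le_l2 (f : GridIdx N → ℝ) : 𝔼 p, |f p| ≤ l2 N f := by
  refine le_of_sq_le_sq ?_ (Real.sqrt_nonneg _)
  simpa only [mul_one, one_pow, Fintype.expect_const, sq_abs, l2_sq] using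
    expect_mul_sq_le_sq_mul_sq univ (fun p => |f p|) (fun _ => 1)

lemma abs_le_linf (f : GridIdx N → ℝ) (p : GridIdx N) : |f p| ≤ linf N f :=
  le_ciSup (f := fun q => |f q|) (Set.finite_range _).bddAbove p

lemma expect_eq_zero_of_zeroMean {ψ : GridIdx N → ℝ} (hψ : zeroMean N ψ) : 𝔼 p, ψ p = 0 := by
  rw [Fintype.expect_eq_sum_div_card, show ∑ p, ψ p = 0 from hψ, zero_div]

/-- The discrete `L²` norm `‖∇_h ψ‖₂` of the forward gradient, with the three components added
rather than combined in square mean. -/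
noncomputable def gradNorm (N : ℕ) [NeZero N] (ψ : GridIdx N → ℝ) : ℝ :=
  l2 N (Dx N ψ) + l2 N (Dy N ψ) + l2 N (Dz N ψ)

lemma gradNorm_nonneg (ψ : GridIdx N → ℝ) : 0 ≤ gradNorm N ψ :=
  add_nonneg (add_nonneg (Real.sqrt_nonneg _) (Real.sqrt_nonneg _)) (Real.sqrt_nonneg _)

lemma expect_abs_sub_expect_le_gradNorm (ψ : GridIdx N → ℝ) :
    𝔼 p, |ψ p - 𝔼 q, ψ q| ≤ gradNorm N ψ := by
  calc 𝔼 p, |ψ p - 𝔼 q, ψ q|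
      ≤ (𝔼 r, 𝔼 i, |ψ (i, r) - 𝔼 i', ψ (i', r)|) + 𝔼 i, 𝔼 r, |ψ (i, r) - 𝔼 r', ψ (i, r')| :=
        expect_abs_sub_expect_prod_le ψ
    _ ≤ (𝔼 r, 𝔼 i, |ψ (i, r) - 𝔼 i', ψ (i', r)|) +
          𝔼 i, ((𝔼 k, 𝔼 j, |ψ (i, j, k) - 𝔼 j', ψ (i, j', k)|) +
            𝔼 j, 𝔼 k, |ψ (i, j, k) - 𝔼 k', ψ (i, j, k')|) := by
        gcongr
        exact expect_abs_sub_expect_prod_le _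
    _ ≤ (𝔼 r, 𝔼 i, |Dx N ψ (i, r)|) +
          𝔼 i, ((𝔼 k, 𝔼 j, |Dy N ψ (i, j, k)|) + 𝔼 j, 𝔼 k, |Dz N ψ (i, j, k)|) := by
        refine add_le_add (expect_le_expect fun r _ => ?_) (expect_le_expect fun i _ =>
          add_le_add (expect_le_expect fun k _ => ?_) (expect_le_expect fun j _ => ?_)) <;>
        exact expect_abs_sub_expect_le_expect_abs_diff _
    _ = (𝔼 p, |Dx N ψ p|) + (𝔼 p, |Dy N ψ p|) + 𝔼 p, |Dz N ψ p| := by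
        have hx := expect_comm univ univ fun r i => |Dx N ψ (i, r)|
        have hy (i : ZMod N) := expect_comm univ univ fun k j => |Dy N ψ (i, j, k)|
        simp only [hx, hy, expect_univ_prod (α := ZMod N), expect_add_distrib, add_assoc]
    _ ≤ gradNorm N ψ := by
        rw [gradNorm]
        gcongr <;> exact expect_abs_le_l2 _

end GradNorm

section Telescoping

lemma one_div_succ_mul_sqrt_le {n : ℕ} (hn : n ≠ 0) :
    1 / ((n + 1) * √n) ≤ 2 * (1 / √n - 1 / √(n + 1)) := by
  have hs : 0 < √n := by positivity
  have hr : 0 < √(n + 1) := by positivity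
  have hs2 : √n ^ 2 = n := Real.sq_sqrt n.cast_nonneg
  have hr2 : √(n + 1) ^ 2 = n + 1 := Real.sq_sqrt (by positivity)
  generalize √(n : ℝ) = s at *
  generalize √((n : ℝ) + 1) = r at *
  have hsr : s ≤ r := by nlinarith
  have difference_eq : 1 / s - 1 / r = 1 / ((r + s) * (r * s)) := by
    field_simp
    linarith
  calc 1 / ((n + 1) * s) = 2 * (1 / ((r + r) * (r * s))) := by
        rw [← hr2]
        field_simp
        norm_num
    _ ≤ 2 * (1 / s - 1 / r) := by
        rw [difference_eq]
        gcongr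

lemma abs_sub_le_of_forall_abs_succ_sub_le {u : ℕ → ℝ} {K : ℝ} (hK : 0 ≤ K)
    {m : ℕ} (hm : 1 ≤ m)
    (h : ∀ n, n ≠ 0 → n < m → |u (n + 1) - u n| ≤ K / ((n + 1) * √n)) :
    |u m - u 1| ≤ 2 * K := by
  suffices strong : |u m - u 1| ≤ 2 * K * (1 - 1 / √m) from
    strong.trans <| mul_le_of_le_one_right (by positivity) (sub_le_self 1 (by positivity))
  induction m, hm using Nat.le_induction with
  | base => simp
  | succ m hm ih =>
    have hm0 : m ≠ 0 := Nat.one_le_iff_ne_zero.1 hm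
    have step : |u (m + 1) - u m| ≤ K * (2 * (1 / √m - 1 / √(m + 1))) := by
      grw [h m hm0 m.lt_succ_self, div_eq_mul_one_div, one_div_succ_mul_sqrt_le hm0]
    have := ih fun n hn hnm => h n hn (hnm.trans m.lt_succ_self)
    push_cast
    linarith [abs_sub_le (u (m + 1)) (u m) (u 1)]

end Telescoping

section Sobolev

variable {N : ℕ}

/-- The mean of `ψ` over the box of side lengths `a`, `b`, `c` with lowest corner `p`. -/
noncomputable def boxMean (ψ : GridIdx N → ℝ) (p : GridIdx N) (a b c : ℕ) : ℝ :=
  𝔼 q ∈ arc p.1 a ×ˢ arc p.2.1 b ×ˢ arc p.2.2 c, ψ q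

variable (ψ : GridIdx N → ℝ) (p : GridIdx N) {n a b c : ℕ}

lemma boxMean_one : boxMean ψ p 1 1 1 = ψ p := by
  simp only [boxMean, arc_one, singleton_product_singleton, expect_singleton, Prod.mk.eta]

lemma boxMean_eq_expect_x :
    boxMean ψ p a b c =
      𝔼 i ∈ arc p.1 a, 𝔼 r ∈ arc p.2.1 b ×ˢ arc p.2.2 c, ψ (i, r.1, r.2) :=
  expect_product _ _ _

lemma boxMean_eq_expect_y :
    boxMean ψ p a b c =
      𝔼 j ∈ arc p.2.1 b, 𝔼 r ∈ arc p.1 a ×ˢ arc p.2.2 c, ψ (r.1, j, r.2) := by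
  simp only [boxMean, expect_product]
  exact expect_comm _ _ _

lemma boxMean_eq_expect_z :
    boxMean ψ p a b c =
      𝔼 k ∈ arc p.2.2 c, 𝔼 r ∈ arc p.1 a ×ˢ arc p.2.1 b, ψ (r.1, r.2, k) := by
  rw [expect_comm]
  simp only [boxMean, expect_product]

variable [NeZero N]

lemma boxMean_self : boxMean ψ p N N N = 𝔼 q, ψ q := by
  simp only [boxMean, arc_self, univ_product_univ]

lemma sqrt_sum_sq_eq (f : GridIdx N → ℝ) :
    √(∑ q, f q ^ 2) = √N * l2 N (fun q => f q * N) := by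
  have hN : (N : ℝ) ≠ 0 := NeZero.ne _
  rw [l2, ip, ← Real.sqrt_mul N.cast_nonneg]
  simp only [mul_mul_mul_comm _ (N : ℝ), ← sum_mul, ← sq (f _)]
  field_simp

lemma abs_boxMean_succ_sub_x (hn : n ≠ 0) (hnN : n < N) (hb : n ≤ b) (hbN : b ≤ N)
    (hc : n ≤ c) (hcN : c ≤ N) :
    |boxMean ψ p (n + 1) b c - boxMean ψ p n b c| ≤ √N * l2 N (Dx N ψ) / ((n + 1) * √n) := by
  have sum_eq : ∑ i, ∑ r : ZMod N × ZMod N, (ψ (i + 1, r.1, r.2) - ψ (i, r.1, r.2)) ^ 2 =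
      ∑ q, (ψ (xsh q 1) - ψ q) ^ 2 := by
    simp only [Fintype.sum_prod_type, xsh]
  have l2_eq : √(∑ q, (ψ (xsh q 1) - ψ q) ^ 2) = √N * l2 N (Dx N ψ) := sqrt_sum_sq_eq _
  rw [boxMean_eq_expect_x, boxMean_eq_expect_x, ← l2_eq, ← sum_eq]
  exact abs_expect_arc_succ_sub_expect_arc_le
    (fun i (r : ZMod N × ZMod N) => ψ (i, r.1, r.2)) p.1 hn hnN
    (sq_le_card_arc_product _ _ hb hbN hc hcN)

lemma abs_boxMean_succ_sub_y (hn : n ≠ 0) (hnN : n < N) (ha : n ≤ a) (haN : a ≤ N)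
    (hc : n ≤ c) (hcN : c ≤ N) :
    |boxMean ψ p a (n + 1) c - boxMean ψ p a n c| ≤ √N * l2 N (Dy N ψ) / ((n + 1) * √n) := by
  have sum_eq : ∑ j, ∑ r : ZMod N × ZMod N, (ψ (r.1, j + 1, r.2) - ψ (r.1, j, r.2)) ^ 2 =
      ∑ q, (ψ (ysh q 1) - ψ q) ^ 2 := by
    simp only [Fintype.sum_prod_type, ysh]
    exact sum_comm
  have l2_eq : √(∑ q, (ψ (ysh q 1) - ψ q) ^ 2) = √N * l2 N (Dy N ψ) := sqrt_sum_sq_eq _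
  rw [boxMean_eq_expect_y, boxMean_eq_expect_y, ← l2_eq, ← sum_eq]
  exact abs_expect_arc_succ_sub_expect_arc_le
    (fun j (r : ZMod N × ZMod N) => ψ (r.1, j, r.2)) p.2.1 hn hnN
    (sq_le_card_arc_product _ _ ha haN hc hcN)

lemma abs_boxMean_succ_sub_z (hn : n ≠ 0) (hnN : n < N) (ha : n ≤ a) (haN : a ≤ N)
    (hb : n ≤ b) (hbN : b ≤ N) :
    |boxMean ψ p a b (n + 1) - boxMean ψ p a b n| ≤ √N * l2 N (Dz N ψ) / ((n + 1) * √n) := by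
  have sum_eq : ∑ k, ∑ r : ZMod N × ZMod N, (ψ (r.1, r.2, k + 1) - ψ (r.1, r.2, k)) ^ 2 =
      ∑ q, (ψ (zsh q 1) - ψ q) ^ 2 := by
    rw [sum_comm]
    simp only [Fintype.sum_prod_type, zsh]
  have l2_eq : √(∑ q, (ψ (zsh q 1) - ψ q) ^ 2) = √N * l2 N (Dz N ψ) := sqrt_sum_sq_eq _
  rw [boxMean_eq_expect_z, boxMean_eq_expect_z, ← l2_eq, ← sum_eq]
  exact abs_expect_arc_succ_sub_expect_arc_le
    (fun k (r : ZMod N × ZMod N) => ψ (r.1, r.2, k)) p.2.2 hn hnN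
    (sq_le_card_arc_product _ _ ha haN hb hbN)

lemma abs_boxMean_succ_sub_cube (hn : n ≠ 0) (hnN : n < N) :
    |boxMean ψ p (n + 1) (n + 1) (n + 1) - boxMean ψ p n n n| ≤
      √N * gradNorm N ψ / ((n + 1) * √n) := by
  have hx := abs_boxMean_succ_sub_x ψ p hn hnN n.le_succ hnN n.le_succ hnN
  have hy := abs_boxMean_succ_sub_y ψ p hn hnN le_rfl hnN.le n.le_succ hnN
  have hz := abs_boxMean_succ_sub_z ψ p hn hnN le_rfl hnN.le le_rfl hnN.le
  have split₁ := abs_sub_le (boxMean ψ p (n + 1) (n + 1) (n + 1)) (boxMean ψ p n (n + 1) (n + 1))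
    (boxMean ψ p n n n)
  have split₂ := abs_sub_le (boxMean ψ p n (n + 1) (n + 1)) (boxMean ψ p n n (n + 1))
    (boxMean ψ p n n n)
  rw [gradNorm, mul_add, mul_add, add_div, add_div]
  linarith

lemma abs_sub_expect_le_gradNorm : |ψ p - 𝔼 q, ψ q| ≤ 2 * (√N * gradNorm N ψ) := by
  have telescoped := abs_sub_le_of_forall_abs_succ_sub_le (u := fun n => boxMean ψ p n n n)
    (mul_nonneg (Real.sqrt_nonneg _) (gradNorm_nonneg ψ)) NeZero.one_le
    fun n hn hnN => abs_boxMean_succ_sub_cube ψ p hn hnN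
  rwa [boxMean_self, boxMean_one, abs_sub_comm] at telescoped

lemma linf_le_of_zeroMean (hψ : zeroMean N ψ) : linf N ψ ≤ 2 * (√N * gradNorm N ψ) :=
  ciSup_le fun p => by
    simpa only [expect_eq_zero_of_zeroMean hψ, sub_zero] using abs_sub_expect_le_gradNorm ψ p

end Sobolev

section SummationByParts

lemma expect_mul_sub_comp_symm {α : Type*} [Fintype α] (s : Equiv.Perm α) (f v : α → ℝ) :
    𝔼 p, f p * (v p - v (s.symm p)) = -𝔼 p, (f (s p) - f p) * v p := by
  have shift : 𝔼 p, f (s p) * v p = 𝔼 p, f p * v (s.symm p) :=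
    Fintype.expect_equiv s _ _ fun p => by rw [s.symm_apply_apply]
  simp only [mul_sub, sub_mul, expect_sub_distrib, shift, neg_sub]

variable {N : ℕ} [NeZero N]

lemma ip_dxm (f v : GridIdx N → ℝ) : ip N f (dxm N v) = -ip N (Dx N f) v := by
  have h := expect_mul_sub_comp_symm ((Equiv.addRight 1).prodCongr (.refl _)) f (fun p => v p * N)
  simp only [← sub_mul, mul_right_comm _ (v _), ← mul_assoc] at h
  simp only [ip_eq_expect, dxm, Dx, ← mul_assoc]
  exact h

lemma ip_dym (f v : GridIdx N → ℝ) : ip N f (dym N v) = -ip N (Dy N f) v := by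
  have h := expect_mul_sub_comp_symm
    ((Equiv.refl _).prodCongr ((Equiv.addRight 1).prodCongr (.refl _))) f (fun p => v p * N)
  simp only [← sub_mul, mul_right_comm _ (v _), ← mul_assoc] at h
  simp only [ip_eq_expect, dym, Dy, ← mul_assoc]
  exact h

lemma ip_dzm (f v : GridIdx N → ℝ) : ip N f (dzm N v) = -ip N (Dz N f) v := by
  have h := expect_mul_sub_comp_symm
    ((Equiv.refl _).prodCongr ((Equiv.refl _).prodCongr (Equiv.addRight 1))) f (fun p => v p * N)
  simp only [← sub_mul, mul_right_comm _ (v _), ← mul_assoc] at h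
  simp only [ip_eq_expect, dzm, Dz, ← mul_assoc]
  exact h

end SummationByParts

section Energy

variable {N : ℕ}

/-- The elliptic operator `L_g ψ = -∇_h · (A g ∇_h ψ)` with mobility `g`. -/
noncomputable def ellipticOp (N : ℕ) (g ψ : GridIdx N → ℝ) : GridIdx N → ℝ := fun p =>
  -(dxm N (fun q => Ax N g q * Dx N ψ q) p + dym N (fun q => Ay N g q * Dy N ψ q) p
    + dzm N (fun q => Az N g q * Dz N ψ q) p)

variable [NeZero N]

lemma ip_ellipticOp (g ψ : GridIdx N → ℝ) :
    ip N ψ (ellipticOp N g ψ) =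
      ip N (Dx N ψ) (fun q => Ax N g q * Dx N ψ q) +
        ip N (Dy N ψ) (fun q => Ay N g q * Dy N ψ q) +
          ip N (Dz N ψ) (fun q => Az N g q * Dz N ψ q) := by
  have hx := ip_dxm ψ fun q => Ax N g q * Dx N ψ q
  have hy := ip_dym ψ fun q => Ay N g q * Dy N ψ q
  have hz := ip_dzm ψ fun q => Az N g q * Dz N ψ q
  rw [ip_eq_expect] at hx hy hz ⊢
  simp only [ellipticOp, mul_neg, mul_add, expect_neg_distrib, expect_add_distrib]
  linarith

lemma mul_l2_sq_le_ip {c : ℝ} {a : GridIdx N → ℝ} (f : GridIdx N → ℝ) (ha : ∀ p, c ≤ a p) :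
    c * l2 N f ^ 2 ≤ ip N f (fun q => a q * f q) := by
  rw [l2_sq, ip_eq_expect, mul_expect]
  refine expect_le_expect fun p _ => ?_
  rw [mul_left_comm, ← sq]
  gcongr
  exact ha p

variable {c : ℝ} {g ψ : GridIdx N → ℝ}

lemma mul_gradNorm_sq_le_ip_ellipticOp (hc : 0 ≤ c) (hg : ∀ p, c ≤ g p) :
    c * gradNorm N ψ ^ 2 ≤ 3 * ip N ψ (ellipticOp N g ψ) := by
  have average_ge (p q : GridIdx N) : c ≤ (g p + g q) / 2 := by linarith [hg p, hg q]
  have hx := mul_l2_sq_le_ip (Dx N ψ) fun p => average_ge (xsh p 1) p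
  have hy := mul_l2_sq_le_ip (Dy N ψ) fun p => average_ge (ysh p 1) p
  have hz := mul_l2_sq_le_ip (Dz N ψ) fun p => average_ge (zsh p 1) p
  have sq_add_le : gradNorm N ψ ^ 2 ≤
      3 * (l2 N (Dx N ψ) ^ 2 + l2 N (Dy N ψ) ^ 2 + l2 N (Dz N ψ) ^ 2) := by
    rw [gradNorm]
    nlinarith [sq_nonneg (l2 N (Dx N ψ) - l2 N (Dy N ψ)),
      sq_nonneg (l2 N (Dy N ψ) - l2 N (Dz N ψ)), sq_nonneg (l2 N (Dx N ψ) - l2 N (Dz N ψ))]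
  calc c * gradNorm N ψ ^ 2
      ≤ c * (3 * (l2 N (Dx N ψ) ^ 2 + l2 N (Dy N ψ) ^ 2 + l2 N (Dz N ψ) ^ 2)) := by gcongr
    _ ≤ 3 * ip N ψ (ellipticOp N g ψ) := by
        rw [ip_ellipticOp]
        simp only [Ax, Ay, Az]
        linarith

lemma ip_le_mul_gradNorm {f : GridIdx N → ℝ} {B : ℝ} (hψ : zeroMean N ψ) (hf : ∀ p, |f p| ≤ B) :
    ip N ψ f ≤ B * gradNorm N ψ := by
  have hB : 0 ≤ B := (abs_nonneg _).trans (hf 0)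
  calc ip N ψ f = 𝔼 p, ψ p * f p := ip_eq_expect ψ f
    _ ≤ 𝔼 p, B * |ψ p| := expect_le_expect fun p _ => by
        rw [mul_comm B]
        exact (le_abs_self _).trans (abs_mul (ψ p) (f p) ▸ by gcongr; exact hf p)
    _ = B * 𝔼 p, |ψ p| := (mul_expect _ _ _).symm
    _ ≤ B * gradNorm N ψ := by
        gcongr
        simpa only [expect_eq_zero_of_zeroMean hψ, sub_zero] using
          expect_abs_sub_expect_le_gradNorm ψ

lemma gradNorm_le_of_abs_ellipticOp_le {B : ℝ} (hc : 0 < c) (hg : ∀ p, c ≤ g p)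
    (hψ : zeroMean N ψ) (hB : ∀ p, |ellipticOp N g ψ p| ≤ B) :
    gradNorm N ψ ≤ 3 * B / c := by
  have energy : c * gradNorm N ψ ^ 2 ≤ 3 * (B * gradNorm N ψ) :=
    (mul_gradNorm_sq_le_ip_ellipticOp hc.le hg).trans (by gcongr; exact ip_le_mul_gradNorm hψ hB)
  have hB0 : 0 ≤ B := (abs_nonneg _).trans (hB 0)
  obtain h0 | hpos := (gradNorm_nonneg ψ).eq_or_lt
  · rw [← h0]
    positivity
  · rw [le_div_iff₀ hc]
    refine le_of_mul_le_mul_right ?_ hpos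
    linarith

lemma linf_le_of_abs_ellipticOp_le {B : ℝ} (hc : 0 < c) (hg : ∀ p, c ≤ g p)
    (hψ : zeroMean N ψ) (hB : ∀ p, |ellipticOp N g ψ p| ≤ B) :
    linf N ψ ≤ 6 * B * c⁻¹ * √N := by
  calc linf N ψ ≤ 2 * (√N * gradNorm N ψ) := linf_le_of_zeroMean ψ hψ
    _ ≤ 2 * (√N * (3 * B / c)) := by
        gcongr
        exact gradNorm_le_of_abs_ellipticOp_le hc hg hψ hB
    _ = 6 * B * c⁻¹ * √N := by ring

end Energy

end PNP

/-- Bound `‖L_g⁻¹(φ₁ - φ₂)‖_∞ ≤ C₁ g₀⁻¹ h^{-1/2}` for a mobility bounded below by `g₀`. -/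
theorem stmt3 (M : ℝ) (hM : 0 < M) :
    ∃ C1 : ℝ, 0 < C1 ∧
      ∀ (N : ℕ) [NeZero N], ∀ g0 : ℝ, 0 < g0 →
      ∀ φ1 φ2 g ψ : GridIdx N → ℝ,
        linf N φ1 ≤ M → linf N φ2 ≤ M →
        zeroMean N (fun p => φ1 p - φ2 p) →
        (∀ p, g0 ≤ g p) →
        zeroMean N ψ →
        (∀ p, -(dxm N (fun q => Ax N g q * Dx N ψ q) p
              + dym N (fun q => Ay N g q * Dy N ψ q) p
              + dzm N (fun q => Az N g q * Dz N ψ q) p) = φ1 p - φ2 p) →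
        linf N ψ ≤ C1 * g0⁻¹ * ((1 : ℝ) / N) ^ (-(1 : ℝ) / 2) := by
  refine ⟨12 * M, by positivity, fun N _ g0 hg0 φ1 φ2 g ψ hφ1 hφ2 _ hg hψ heq => ?_⟩
  have source_le (p : GridIdx N) : |ellipticOp N g ψ p| ≤ 2 * M := by
    rw [show ellipticOp N g ψ p = φ1 p - φ2 p from heq p]
    linarith [abs_sub (φ1 p) (φ2 p), abs_le_linf φ1 p, abs_le_linf φ2 p]
  have mesh_pow : ((1 : ℝ) / N) ^ (-(1 : ℝ) / 2) = √N := by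
    rw [one_div, Real.inv_rpow N.cast_nonneg, ← Real.rpow_neg N.cast_nonneg, Real.sqrt_eq_rpow]
    norm_num
  rw [mesh_pow]
  calc linf N ψ ≤ 6 * (2 * M) * g0⁻¹ * √N := linf_le_of_abs_ellipticOp_le hg0 hg hψ source_le
    _ = 12 * M * g0⁻¹ * √N := by ring
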